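/- Let 𝒜 be an abelian category and let 𝒜₀ ⊆ 𝒜 be a full abelian subcategory. Suppose that for all objects E, F of 𝒜₀ with Hom^0(E, F) = Hom^1(E, F) = 0 one has Hom^p(E, F) = 0 for all p ∈ ℤ. Then for any two objects E, F of D^b(𝒜) whose cohomology objects all lie in 𝒜₀ and which satisfy Hom^n(E, F) = 0 for all n ≤ 0, the groups Hom^p(H^i(E), E') vanish for every p ∈ ℤ whenever E' is a cohomology object H^{i-n}(F) with n ≥ 2; in particular Hom^p(H^i(E), H^{i-2}(F)) = 0 for all i, p ∈ ℤ. -/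

import Mathlib

open CategoryTheory Limits DerivedCategory

universe w v u

noncomputable section

variable (𝒜 : Type u) [Category.{v} 𝒜] [Abelian 𝒜] [HasDerivedCategory.{w} 𝒜]

/-- The object of the derived category associated with an object of the abelian
category, placed in degree `0`. -/
abbrev degZero (A : 𝒜) : DerivedCategory 𝒜 := (DerivedCategory.singleFunctor 𝒜 0).obj A

/-- An object of the derived category is bounded (i.e. belongs to `D^b(𝒜)`) if only
finitely many of its cohomology objects are nonzero. -/
def IsBoundedComplex (E : DerivedCategory 𝒜) : Prop :=
  ∃ a b : ℤ, ∀ i : ℤ, (i < a ∨ b < i) →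
    IsZero ((DerivedCategory.homologyFunctor 𝒜 i).obj E)

/-- A collection of objects `A₀` of `𝒜` is a (strictly) full abelian subcategory if it
contains the zero objects and is closed under isomorphisms, kernels, cokernels and
finite biproducts. -/
def IsAbelianSubcategory (A₀ : Set 𝒜) : Prop :=
  (∀ X : 𝒜, IsZero X → X ∈ A₀) ∧
  (∀ X Y : 𝒜, X ∈ A₀ → Nonempty (X ≅ Y) → Y ∈ A₀) ∧
  (∀ (X Y : 𝒜) (f : X ⟶ Y), X ∈ A₀ → Y ∈ A₀ → kernel f ∈ A₀ ∧ cokernel f ∈ A₀) ∧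
  (∀ X Y : 𝒜, X ∈ A₀ → Y ∈ A₀ → (X ⊞ Y) ∈ A₀)

/-- `A₀` is almost hereditary in `𝒜`: for objects `E`, `F` of `A₀`, the vanishing of
`Hom^0(E,F)` and `Hom^1(E,F)` (computed in the derived category) implies the vanishing
of `Hom^p(E,F)` for all `p ∈ ℤ`. -/
def AlmostHereditary (A₀ : Set 𝒜) : Prop :=
  ∀ (A B : 𝒜), A ∈ A₀ → B ∈ A₀ →
    (∀ f : degZero 𝒜 A ⟶ degZero 𝒜 B, f = 0) →
    (∀ f : degZero 𝒜 A ⟶ (degZero 𝒜 B)⟦(1 : ℤ)⟧, f = 0) →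
    ∀ (p : ℤ) (f : degZero 𝒜 A ⟶ (degZero 𝒜 B)⟦p⟧), f = 0

end

/-!
Write `gr^i E` for `H^i(E)[-i]`. By descending induction on `i - j`, which is bounded since `E` is
bounded above and `F` is bounded below, all the groups `Hom^p(H^i E, H^j F)` with `j < i` vanish.
Indeed, for `ε ∈ {0, 1}` a class in `Hom^ε(H^i E, H^j F)` is a morphism `gr^i E ⟶ (gr^j F)[s]` with
`s = ε - (i - j) ≤ 0`. By the induction hypothesis and dévissage along the truncations, it extends
to `τ≥i E` and then lifts to `(τ≤j F)[s]`, giving `g : τ≥i E ⟶ (τ≤j F)[s]`. The composite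
`E ⟶ τ≥i E ⟶ (τ≤j F)[s] ⟶ F[s]` vanishes by assumption, which forces `g` to be the sum of a
morphism factoring through `(τ<i E)[1]` and one factoring through `(τ>j F)[s - 1]`; for degree
reasons both induce zero from `gr^i E` to `(gr^j F)[s]`. Thus `Hom^0(H^i E, H^j F)` and
`Hom^1(H^i E, H^j F)` vanish, and almost heredity yields the vanishing of all `Hom^p(H^i E, H^j F)`.
-/

section GradedOrthogonal

variable {C : Type u} [Category.{v} C] [Preadditive C]

lemma forall_hom_eq_zero_congr {X X' Y Y' : C} (e : X ≅ X') (e' : Y ≅ Y') :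
    (∀ f : X ⟶ Y, f = 0) ↔ ∀ f : X' ⟶ Y', f = 0 :=
  (e.homCongr e').forall_congr fun f => by simp [Iso.homCongr]

variable [HasShift C ℤ]

/-- `X` and `Y` are graded orthogonal if `Hom^n(X, Y) = 0` for every `n : ℤ`. -/
def GradedOrthogonal (X Y : C) : Prop :=
  ∀ (n : ℤ) (f : X ⟶ Y⟦n⟧), f = 0

lemma gradedOrthogonal_congr {X X' Y Y' : C} (e : X ≅ X') (e' : Y ≅ Y') :
    GradedOrthogonal X Y ↔ GradedOrthogonal X' Y' :=
  forall_congr' fun n => forall_hom_eq_zero_congr e ((shiftFunctor C n).mapIso e')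

lemma gradedOrthogonal_iff_leftOrthogonal (X Y : C) :
    GradedOrthogonal X Y ↔
      (ObjectProperty.ofObj fun n : ℤ => Y⟦n⟧).leftOrthogonal X :=
  ⟨by rintro h _ f ⟨n⟩; exact h n f, fun h n f => h f ⟨n⟩⟩

lemma GradedOrthogonal.shift_right {X Y : C} (h : GradedOrthogonal X Y) (b : ℤ) :
    GradedOrthogonal X (Y⟦b⟧) :=
  fun n => (forall_hom_eq_zero_congr (Iso.refl _) ((shiftFunctorAdd C b n).app Y)).1 (h _)

variable [∀ n : ℤ, (shiftFunctor C n).Additive]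

lemma forall_hom_shift_eq_zero_iff (X Y : C) {a b n : ℤ} (h : n + a = b) :
    (∀ f : X⟦a⟧ ⟶ Y⟦b⟧, f = 0) ↔ ∀ f : X ⟶ Y⟦n⟧, f = 0 :=
  (forall_hom_eq_zero_congr (Iso.refl _) ((shiftFunctorAdd' C n a b h).app Y)).trans
    ((Functor.FullyFaithful.ofFullyFaithful (shiftFunctor C a)).homEquiv.forall_congr
      fun f => ((shiftFunctor C a).map_eq_zero_iff (f := f)).symm).symm

lemma gradedOrthogonal_iff_rightOrthogonal (X Y : C) :
    GradedOrthogonal X Y ↔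
      (ObjectProperty.ofObj fun n : ℤ => X⟦n⟧).rightOrthogonal Y := by
  have unshift {m n : ℤ} (h : n + m = 0) :
      (∀ f : X⟦m⟧ ⟶ Y, f = 0) ↔ ∀ f : X ⟶ Y⟦n⟧, f = 0 :=
    (forall_hom_eq_zero_congr (Iso.refl _) ((shiftFunctorZero C ℤ).symm.app Y)).trans
      (forall_hom_shift_eq_zero_iff X Y h)
  refine ⟨?_, fun h n => (unshift (add_neg_cancel n)).1 fun f => h f ⟨-n⟩⟩
  rintro h _ f ⟨n⟩
  exact (unshift (neg_add_cancel n)).2 (h (-n)) f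

lemma GradedOrthogonal.eq_zero {X Y : C} (h : GradedOrthogonal X Y) {a b : ℤ}
    (f : X⟦a⟧ ⟶ Y⟦b⟧) : f = 0 :=
  (forall_hom_shift_eq_zero_iff X Y (sub_add_cancel b a)).2 (h _) f

end GradedOrthogonal

section Devissage

open Pretriangulated Triangulated

variable {C : Type u} [Category.{v} C] [Preadditive C] [HasZeroObject C] [HasShift C ℤ]
  [∀ n : ℤ, (shiftFunctor C n).Additive] [Pretriangulated C]

lemma comp_comp_eq_zero_of_distTriang {S T : Triangle C} (hS : S ∈ distTriang C)
    (hT : T ∈ distTriang C) (hST : ∀ f : S.obj₃ ⟶ T.obj₁⟦(1 : ℤ)⟧, f = 0) {A B : C}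
    (hA : ∀ f : A ⟶ T.obj₁, f = 0) (hB : ∀ f : S.obj₃ ⟶ B, f = 0)
    (x : A ⟶ S.obj₂) (g : S.obj₂ ⟶ T.obj₂) (y : T.obj₂ ⟶ B)
    (hg : S.mor₁ ≫ g ≫ T.mor₂ = 0) : x ≫ g ≫ y = 0 := by
  obtain ⟨r, hr⟩ := Triangle.yoneda_exact₂ _ hS (g ≫ T.mor₂) hg
  obtain ⟨p, rfl⟩ := Triangle.coyoneda_exact₃ _ hT r (hST _)
  obtain ⟨q, hq⟩ := Triangle.coyoneda_exact₂ _ hT (g - S.mor₂ ≫ p) (by simp [hr])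
  have hg' : g = q ≫ T.mor₁ + S.mor₂ ≫ p := by rw [← hq, sub_add_cancel]
  have hxq : x ≫ q = 0 := hA _
  have hpy : p ≫ y = 0 := hB _
  simp only [hg', Preadditive.add_comp, Category.assoc, hpy, comp_zero,
    reassoc_of% hxq, zero_comp, add_zero]

variable [IsTriangulated C] (t : TStructure C)

/-- The canonical isomorphism `τ≥k X ≅ τ≥k τ≥i X` for `i ≤ k`. -/
noncomputable def truncGEIsoTruncGETruncGE (X : C) {i k : ℤ} (h : i ≤ k) :
    (t.truncGE k).obj X ≅ (t.truncGE k).obj ((t.truncGE i).obj X) :=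
  have := t.isIso_truncGE_map_truncGEπ_app k i h X
  asIso ((t.truncGE k).map ((t.truncGEπ i).app X))

variable (P : ObjectProperty C) [P.ContainsZero]
  [P.IsClosedUnderIsomorphisms] [P.IsTriangulatedClosed₂]

lemma prop_truncGE_of_prop_truncLTGE (X : C) (b : ℤ) [t.IsLE X b] {i : ℤ}
    (h : ∀ k, i ≤ k → P ((t.truncLTGE k (k + 1)).obj X)) : P ((t.truncGE i).obj X) := by
  obtain _ | _ := lt_or_ge b i
  · have := t.isLE_of_le X b (i - 1)
    exact P.prop_of_isZero (t.isZero_truncGE_obj_of_isLE (i - 1) i (by lia) X)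
  · exact P.ext_of_isTriangulatedClosed₂ _
      (t.triangleLTGE_distinguished (i + 1) ((t.truncGE i).obj X)) (h i le_rfl)
      (P.prop_of_iso (truncGEIsoTruncGETruncGE t X (by lia))
        (prop_truncGE_of_prop_truncLTGE X b fun k hk => h k (by lia)))
termination_by (b + 1 - i).toNat

lemma prop_truncLT_of_prop_truncGELT (Y : C) (a : ℤ) [t.IsGE Y a] {j : ℤ}
    (h : ∀ l, l < j → P ((t.truncGELT l (l + 1)).obj Y)) : P ((t.truncLT j).obj Y) := by
  obtain _ | _ := le_or_gt j a
  · have := t.isGE_of_ge Y j a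
    exact P.prop_of_isZero (t.isZero_truncLT_obj_of_isGE j Y)
  · have hgr := h (j - 1) (by lia)
    rw [sub_add_cancel] at hgr
    exact P.ext_of_isTriangulatedClosed₂ _
      (t.triangleLTLTGELT_distinguished (j - 1) j (by lia) Y)
      (prop_truncLT_of_prop_truncGELT Y a fun l hl => h l (by lia)) hgr
termination_by (j - a).toNat

end Devissage

section TruncationPieces

open Pretriangulated Triangulated

variable {C : Type u} [Category.{v} C] [Preadditive C] [HasZeroObject C] [HasShift C ℤ]
  [∀ n : ℤ, (shiftFunctor C n).Additive] [Pretriangulated C] (t : TStructure C)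

lemma truncGE_comp_comp_truncLT_eq_zero {X Y : C} {i j s : ℤ}
    (hs : i + s ≤ j + 1) (hXY : ∀ f : X ⟶ Y⟦s⟧, f = 0) {A B : C}
    (hA : t.IsLE A i) (hB : t.IsGE B (j - s))
    (x : A ⟶ (t.truncGE i).obj X)
    (g : (t.truncGE i).obj X ⟶ ((t.truncLT (j + 1)).obj Y)⟦s⟧)
    (y : ((t.truncLT (j + 1)).obj Y)⟦s⟧ ⟶ B) : x ≫ g ≫ y = 0 := by
  have hX : t.IsLE (((t.truncLT i).obj X)⟦(1 : ℤ)⟧) (i - 2) :=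
    t.isLE_shift _ (i - 1) 1 _
  have hY₀ : t.IsGE (((t.truncGE (j + 1)).obj Y)⟦s⟧) (j - s + 1) :=
    t.isGE_shift _ (j + 1) s _
  have hY₁ : t.IsGE (((t.truncGE (j + 1)).obj Y)⟦s⟧⟦(-1 : ℤ)⟧) (j - s + 2) :=
    t.isGE_shift _ (j - s + 1) (-1) _
  have hY₂ : t.IsGE (((t.truncGE (j + 1)).obj Y)⟦s⟧⟦(-1 : ℤ)⟧⟦(1 : ℤ)⟧) (j - s + 1) :=
    t.isGE_shift _ (j - s + 2) 1 _
  exact comp_comp_eq_zero_of_distTriang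
    (rot_of_distTriang _ (t.triangleLTGE_distinguished i X))
    (inv_rot_of_distTriang _
      (Triangle.shift_distinguished _ (t.triangleLTGE_distinguished (j + 1) Y) s))
    (fun f => t.zero_of_isLE_of_isGE f (i - 2) (j - s + 1) (by lia) hX hY₂)
    (fun f => t.zero_of_isLE_of_isGE f i (j - s + 2) (by lia) hA hY₁)
    (fun f => t.zero_of_isLE_of_isGE f (i - 2) (j - s) (by lia) hX hB) x g y (hXY _)

variable [IsTriangulated C]

lemma GradedOrthogonal.truncGE_left {X Y : C} (b : ℤ) [t.IsLE X b] {i : ℤ}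
    (h : ∀ k, i ≤ k → GradedOrthogonal ((t.truncLTGE k (k + 1)).obj X) Y) :
    GradedOrthogonal ((t.truncGE i).obj X) Y := by
  simp only [gradedOrthogonal_iff_leftOrthogonal] at h ⊢
  exact prop_truncGE_of_prop_truncLTGE t _ X b h

lemma GradedOrthogonal.truncLT_right {X Y : C} (a : ℤ) [t.IsGE Y a] {j : ℤ}
    (h : ∀ l, l < j → GradedOrthogonal X ((t.truncGELT l (l + 1)).obj Y)) :
    GradedOrthogonal X ((t.truncLT j).obj Y) := by
  simp only [gradedOrthogonal_iff_rightOrthogonal] at h ⊢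
  exact prop_truncLT_of_prop_truncGELT t _ Y a h

lemma exists_comp_comp_of_gradedOrthogonal (X Y : C) {i j : ℤ}
    (h₁ : GradedOrthogonal ((t.truncGE (i + 1)).obj X) ((t.truncGELT j (j + 1)).obj Y))
    (h₂ : GradedOrthogonal ((t.truncGE i).obj X) ((t.truncLT j).obj Y)) {s : ℤ}
    (f : (t.truncLTGE i (i + 1)).obj X ⟶ ((t.truncGELT j (j + 1)).obj Y)⟦s⟧) :
    ∃ (x : (t.truncLTGE i (i + 1)).obj X ⟶ (t.truncGE i).obj X)
      (g : (t.truncGE i).obj X ⟶ ((t.truncLT (j + 1)).obj Y)⟦s⟧)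
      (y : ((t.truncLT (j + 1)).obj Y)⟦s⟧ ⟶ ((t.truncGELT j (j + 1)).obj Y)⟦s⟧),
      f = x ≫ g ≫ y := by
  have h₁' := (gradedOrthogonal_congr
    (truncGEIsoTruncGETruncGE t X (i := i) (k := i + 1) (by lia)) (Iso.refl _)).1 h₁
  obtain ⟨f', hf'⟩ := Triangle.yoneda_exact₂ _ (inv_rot_of_distTriang _
    (t.triangleLTGE_distinguished (i + 1) ((t.truncGE i).obj X))) f (h₁'.eq_zero _)
  obtain ⟨g, hg⟩ := Triangle.coyoneda_exact₃ _ (Triangle.shift_distinguished _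
    (t.triangleLTLTGELT_distinguished j (j + 1) (by lia) Y) s) f' (h₂.shift_right s 1 _)
  exact ⟨_, g, _, by rw [hf', hg]; rfl⟩

lemma hom_truncLTGE_truncGELT_eq_zero (X Y : C) {i j s : ℤ}
    (hs : i + s ≤ j + 1)
    (h₁ : GradedOrthogonal ((t.truncGE (i + 1)).obj X) ((t.truncGELT j (j + 1)).obj Y))
    (h₂ : GradedOrthogonal ((t.truncGE i).obj X) ((t.truncLT j).obj Y))
    (hXY : ∀ f : X ⟶ Y⟦s⟧, f = 0)
    (f : (t.truncLTGE i (i + 1)).obj X ⟶ ((t.truncGELT j (j + 1)).obj Y)⟦s⟧) : f = 0 := by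
  obtain ⟨x, g, y, rfl⟩ := exists_comp_comp_of_gradedOrthogonal t X Y h₁ h₂ f
  exact truncGE_comp_comp_truncLT_eq_zero t hs hXY (t.isLE_truncLT_obj _ _ _)
    (t.isGE_shift _ j s _) x g y

theorem gradedOrthogonal_truncLTGE_truncGELT {X Y : C} (b a : ℤ) [t.IsLE X b] [t.IsGE Y a]
    (hXY : ∀ s : ℤ, s ≤ 0 → ∀ f : X ⟶ Y⟦s⟧, f = 0)
    (h : ∀ i j : ℤ, j < i →
      (∀ f : (t.truncLTGE i (i + 1)).obj X ⟶
        ((t.truncGELT j (j + 1)).obj Y)⟦j - i⟧, f = 0) →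
      (∀ f : (t.truncLTGE i (i + 1)).obj X ⟶
        ((t.truncGELT j (j + 1)).obj Y)⟦j - i + 1⟧, f = 0) →
      GradedOrthogonal ((t.truncLTGE i (i + 1)).obj X) ((t.truncGELT j (j + 1)).obj Y))
    {i j : ℤ} (hij : j < i) :
    GradedOrthogonal ((t.truncLTGE i (i + 1)).obj X) ((t.truncGELT j (j + 1)).obj Y) := by
  obtain _ | _ := lt_or_ge b i
  · have : t.IsLE ((t.truncLTGE i (i + 1)).obj X) b := by dsimp; infer_instance
    have hX : IsZero ((t.truncLTGE i (i + 1)).obj X) := t.isZero _ b i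
    exact fun _ _ => hX.eq_of_src _ _
  obtain _ | _ := lt_or_ge j a
  · have : t.IsGE ((t.truncGELT j (j + 1)).obj Y) a := by dsimp; infer_instance
    have hY : IsZero ((t.truncGELT j (j + 1)).obj Y) := t.isZero _ (j + 1 - 1) a
    exact fun n _ => ((shiftFunctor C n).map_isZero hY).eq_of_tgt _ _
  have ih (k l : ℤ) (hkl : i - j < k - l) :
      GradedOrthogonal ((t.truncLTGE k (k + 1)).obj X) ((t.truncGELT l (l + 1)).obj Y) :=
    gradedOrthogonal_truncLTGE_truncGELT b a hXY h (by lia)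
  have h₁ : GradedOrthogonal ((t.truncGE (i + 1)).obj X) ((t.truncGELT j (j + 1)).obj Y) :=
    .truncGE_left t b fun k hk => ih k j (by lia)
  have h₂ : GradedOrthogonal ((t.truncGE i).obj X) ((t.truncLT j).obj Y) :=
    .truncGE_left t b fun k hk => .truncLT_right t a fun l hl => ih k l (by lia)
  exact h i j hij
    (hom_truncLTGE_truncGELT_eq_zero t X Y (by lia) h₁ h₂ (hXY _ (by lia)))
    (hom_truncLTGE_truncGELT_eq_zero t X Y (by lia) h₁ h₂ (hXY _ (by lia)))
termination_by (b - a + 1 - (i - j)).toNat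

end TruncationPieces

section HomologyPieces

open Pretriangulated Triangulated

variable {𝒜 : Type u} [Category.{v} 𝒜] [Abelian 𝒜] [HasDerivedCategory.{w} 𝒜]

lemma isIso_homologyFunctor_map_truncLTι (X : DerivedCategory 𝒜) {n m : ℤ} (h : n < m) :
    IsIso ((homologyFunctor 𝒜 n).map ((TStructure.t.truncLTι m).app X)) := by
  have hT := TStructure.t.triangleLTGE_distinguished m X
  have hz (k : ℤ) (hk : k < m) :
      IsZero ((homologyFunctor 𝒜 k).obj ((TStructure.t.truncGE m).obj X)) :=
    isZero_of_isGE _ m k hk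
  have : Epi ((homologyFunctor 𝒜 n).map ((TStructure.t.truncLTι m).app X)) :=
    (HomologySequence.epi_homologyMap_mor₁_iff _ hT n).2 ((hz n h).eq_of_tgt _ _)
  have : Mono ((homologyFunctor 𝒜 n).map ((TStructure.t.truncLTι m).app X)) :=
    (HomologySequence.mono_homologyMap_mor₁_iff _ hT (n - 1) n (by lia)).2
      ((hz (n - 1) (by lia)).eq_of_src _ _)
  exact isIso_of_mono_of_epi _

lemma isIso_homologyFunctor_map_truncGEπ (X : DerivedCategory 𝒜) {n m : ℤ} (h : m ≤ n) :
    IsIso ((homologyFunctor 𝒜 n).map ((TStructure.t.truncGEπ m).app X)) := by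
  have hT := TStructure.t.triangleLTGE_distinguished m X
  have hz (k : ℤ) (hk : m ≤ k) :
      IsZero ((homologyFunctor 𝒜 k).obj ((TStructure.t.truncLT m).obj X)) :=
    isZero_of_isLE _ (m - 1) k (by lia)
  have : Epi ((homologyFunctor 𝒜 n).map ((TStructure.t.truncGEπ m).app X)) :=
    (HomologySequence.epi_homologyMap_mor₂_iff _ hT n (n + 1) rfl).2
      ((hz (n + 1) (by lia)).eq_of_tgt _ _)
  have : Mono ((homologyFunctor 𝒜 n).map ((TStructure.t.truncGEπ m).app X)) :=
    (HomologySequence.mono_homologyMap_mor₂_iff _ hT n).2 ((hz n h).eq_of_src _ _)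
  exact isIso_of_mono_of_epi _

lemma nonempty_homology_truncLTGE_iso (X : DerivedCategory 𝒜) (n : ℤ) :
    Nonempty ((homologyFunctor 𝒜 n).obj ((TStructure.t.truncLTGE n (n + 1)).obj X) ≅
      (homologyFunctor 𝒜 n).obj X) := by
  have := isIso_homologyFunctor_map_truncLTι ((TStructure.t.truncGE n).obj X) (lt_add_one n)
  have := isIso_homologyFunctor_map_truncGEπ X (le_refl n)
  exact ⟨asIso ((homologyFunctor 𝒜 n).map
      ((TStructure.t.truncLTι (n + 1)).app ((TStructure.t.truncGE n).obj X))) ≪≫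
    (asIso ((homologyFunctor 𝒜 n).map ((TStructure.t.truncGEπ n).app X))).symm⟩

lemma nonempty_iso_degZero_homology_shift (X : DerivedCategory 𝒜) (n : ℤ)
    (hge : X.IsGE n) (hle : X.IsLE n) :
    Nonempty (X ≅ (degZero 𝒜 ((homologyFunctor 𝒜 n).obj X))⟦-n⟧) := by
  obtain ⟨A, ⟨e⟩⟩ := exists_iso_singleFunctor_obj_of_isGE_of_isLE X n
  have e' : A ≅ (homologyFunctor 𝒜 n).obj X :=
    ((singleFunctorCompHomologyFunctorIso 𝒜 n).app A).symm ≪≫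
      (homologyFunctor 𝒜 n).mapIso e.symm
  exact ⟨e ≪≫ (singleFunctor 𝒜 n).mapIso e' ≪≫
    (((singleFunctors 𝒜).shiftIso (-n) n 0 (by lia)).app _).symm⟩

lemma nonempty_truncLTGE_iso (X : DerivedCategory 𝒜) (n : ℤ) :
    Nonempty ((TStructure.t.truncLTGE n (n + 1)).obj X ≅
      (degZero 𝒜 ((homologyFunctor 𝒜 n).obj X))⟦-n⟧) := by
  obtain ⟨e⟩ := nonempty_iso_degZero_homology_shift
    ((TStructure.t.truncLTGE n (n + 1)).obj X) n inferInstance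
    (TStructure.t.isLE_truncLT_obj _ _ _)
  obtain ⟨e'⟩ := nonempty_homology_truncLTGE_iso X n
  exact ⟨e ≪≫ (shiftFunctor _ (-n)).mapIso ((singleFunctor 𝒜 0).mapIso e')⟩

lemma nonempty_truncGELT_iso (X : DerivedCategory 𝒜) (n : ℤ) :
    Nonempty ((TStructure.t.truncGELT n (n + 1)).obj X ≅
      (degZero 𝒜 ((homologyFunctor 𝒜 n).obj X))⟦-n⟧) := by
  obtain ⟨e⟩ := nonempty_truncLTGE_iso X n
  exact ⟨(TStructure.t.truncGELTIsoLTGE n (n + 1)).app X ≪≫ e⟩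

lemma forall_truncLTGE_hom_truncGELT_eq_zero_iff (X Y : DerivedCategory 𝒜) {i j n m : ℤ}
    (h : n + i = m + j) :
    (∀ f : (TStructure.t.truncLTGE i (i + 1)).obj X ⟶
      ((TStructure.t.truncGELT j (j + 1)).obj Y)⟦n⟧, f = 0) ↔
    ∀ f : degZero 𝒜 ((homologyFunctor 𝒜 i).obj X) ⟶
      (degZero 𝒜 ((homologyFunctor 𝒜 j).obj Y))⟦m⟧, f = 0 := by
  obtain ⟨eX⟩ := nonempty_truncLTGE_iso X i
  obtain ⟨eY⟩ := nonempty_truncGELT_iso Y j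
  exact (forall_hom_eq_zero_congr eX ((shiftFunctor _ n).mapIso eY ≪≫
    (shiftFunctorAdd' _ (-j) n (-j + n) rfl).symm.app _)).trans
    (forall_hom_shift_eq_zero_iff _ _ (by lia))

lemma AlmostHereditary.gradedOrthogonal {A₀ : Set 𝒜} (h : AlmostHereditary 𝒜 A₀) {A B : 𝒜}
    (hA : A ∈ A₀) (hB : B ∈ A₀)
    (h₀ : ∀ f : degZero 𝒜 A ⟶ (degZero 𝒜 B)⟦(0 : ℤ)⟧, f = 0)
    (h₁ : ∀ f : degZero 𝒜 A ⟶ (degZero 𝒜 B)⟦(1 : ℤ)⟧, f = 0) :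
    GradedOrthogonal (degZero 𝒜 A) (degZero 𝒜 B) :=
  h A B hA hB
    ((forall_hom_eq_zero_congr (Iso.refl _) ((shiftFunctorZero _ ℤ).app _)).1 h₀) h₁

lemma IsBoundedComplex.minus {E : DerivedCategory 𝒜} (h : IsBoundedComplex 𝒜 E) :
    TStructure.t.minus E := by
  obtain ⟨_, b, h⟩ := h
  exact ⟨b, (isLE_iff E b).2 fun i hi => h i (.inr hi)⟩

lemma IsBoundedComplex.plus {E : DerivedCategory 𝒜} (h : IsBoundedComplex 𝒜 E) :
    TStructure.t.plus E := by
  obtain ⟨a, _, h⟩ := h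
  exact ⟨a, (isGE_iff E a).2 fun i hi => h i (.inl hi)⟩

theorem stmt13_general {A₀ : Set 𝒜} (hAH : AlmostHereditary 𝒜 A₀)
    {E F : DerivedCategory 𝒜} (hEminus : TStructure.t.minus E) (hFplus : TStructure.t.plus F)
    (hE : ∀ i : ℤ, (homologyFunctor 𝒜 i).obj E ∈ A₀)
    (hF : ∀ i : ℤ, (homologyFunctor 𝒜 i).obj F ∈ A₀)
    (hvan : ∀ n : ℤ, n ≤ 0 → ∀ f : E ⟶ F⟦n⟧, f = 0) {i j : ℤ} (hij : j < i) :
    GradedOrthogonal (degZero 𝒜 ((homologyFunctor 𝒜 i).obj E))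
      (degZero 𝒜 ((homologyFunctor 𝒜 j).obj F)) := by
  obtain ⟨b, hb⟩ := hEminus
  obtain ⟨a, ha⟩ := hFplus
  suffices h : GradedOrthogonal ((TStructure.t.truncLTGE i (i + 1)).obj E)
      ((TStructure.t.truncGELT j (j + 1)).obj F) from fun p =>
    (forall_truncLTGE_hom_truncGELT_eq_zero_iff E F (sub_add_cancel (p + j) i)).1 (h _)
  refine gradedOrthogonal_truncLTGE_truncGELT TStructure.t b a hvan (fun k l _ h₀ h₁ n => ?_) hij
  refine (forall_truncLTGE_hom_truncGELT_eq_zero_iff E F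
    (sub_add_cancel (n + k) l).symm).2 (hAH.gradedOrthogonal (hE k) (hF l) ?_ ?_ _)
  · exact (forall_truncLTGE_hom_truncGELT_eq_zero_iff E F (by lia)).1 h₀
  · exact (forall_truncLTGE_hom_truncGELT_eq_zero_iff E F (by lia)).1 h₁

end HomologyPieces

theorem stmt13 {𝒜 : Type u} [Category.{v} 𝒜] [Abelian 𝒜] [HasDerivedCategory.{w} 𝒜]
    (A₀ : Set 𝒜) (hA₀ : IsAbelianSubcategory 𝒜 A₀) (hAH : AlmostHereditary 𝒜 A₀)
    (E F : DerivedCategory 𝒜)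
    (hEbdd : IsBoundedComplex 𝒜 E) (hFbdd : IsBoundedComplex 𝒜 F)
    (hE : ∀ i : ℤ, (DerivedCategory.homologyFunctor 𝒜 i).obj E ∈ A₀)
    (hF : ∀ i : ℤ, (DerivedCategory.homologyFunctor 𝒜 i).obj F ∈ A₀)
    (hvan : ∀ n : ℤ, n ≤ 0 → ∀ f : E ⟶ F⟦n⟧, f = 0) :
    (∀ (i p n : ℤ), 2 ≤ n →
      ∀ f : degZero 𝒜 ((DerivedCategory.homologyFunctor 𝒜 i).obj E) ⟶
        (degZero 𝒜 ((DerivedCategory.homologyFunctor 𝒜 (i - n)).obj F))⟦p⟧, f = 0) ∧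
    (∀ i p : ℤ,
      ∀ f : degZero 𝒜 ((DerivedCategory.homologyFunctor 𝒜 i).obj E) ⟶
        (degZero 𝒜 ((DerivedCategory.homologyFunctor 𝒜 (i - 2)).obj F))⟦p⟧, f = 0) := by
  have vanish {i j : ℤ} (hij : j < i) :=
    stmt13_general hAH hEbdd.minus hFbdd.plus hE hF hvan hij
  exact ⟨fun i p n hn => vanish (by lia) p, fun i p => vanish (by lia) p⟩
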